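/- Let S be a dense subsemigroup of ((0, ∞), +) that is also closed under multiplication, let u, v ∈ ℕ, and let A be a u × v matrix with entries from ℚ which is image partition regular near 0 over S. Then I(A) = {p ∈ 0⁺(S) : for every P ∈ p there exists x⃗ ∈ S^v such that all entries of Ax⃗ are in P} is a two-sided ideal of (0⁺(S), ·): for every p ∈ 0⁺(S) and q ∈ I(A), both p · q ∈ I(A) and q · p ∈ I(A). -/

import Mathlib

/-- The semigroup operation `·` on the ultrafilters `βS_d` on `S ⊆ ℝ`:
`B ∈ p · q` iff `{x ∈ S : {y ∈ S : x · y ∈ B} ∈ q} ∈ p`. -/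
def umulS (S : Set ℝ) (hS : ∀ a ∈ S, ∀ b ∈ S, a * b ∈ S)
    (p q : Ultrafilter S) : Ultrafilter S :=
  p.bind fun x => q.map fun y => (⟨x.1 * y.1, hS x.1 x.2 y.1 y.2⟩ : S)

/-- `0⁺(S)`: the ultrafilters `p` on `S` with `(0, r) ∩ S ∈ p` for every `r > 0`. -/
def zeroPlus (S : Set ℝ) : Set (Ultrafilter S) :=
  {p | ∀ r : ℝ, 0 < r → {s : S | (s : ℝ) < r} ∈ p}

/-- A `u × v` matrix `A` over ℚ is image partition regular near 0 over `S`. -/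
def IPRNearZero {u v : ℕ} (S : Set ℝ) (A : Matrix (Fin u) (Fin v) ℚ) : Prop :=
  ∀ (r : ℕ) (E : Fin r → Set ℝ), (∀ i, E i ⊆ S) → (∀ s ∈ S, ∃ i, s ∈ E i) →
    ∀ ε > (0 : ℝ),
      ∃ (i : Fin r) (x : Fin v → ℝ), (∀ j, x j ∈ S) ∧
        ∀ a : Fin u, (A.map ((↑) : ℚ → ℝ)).mulVec x a ∈ E i ∩ Set.Ioo 0 ε

/-- `I(A) = {p ∈ 0⁺(S) : for every P ∈ p there is x⃗ ∈ S^v such that all entries of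
`Ax⃗` are in P}`. -/
def IA {u v : ℕ} (S : Set ℝ) (A : Matrix (Fin u) (Fin v) ℚ) : Set (Ultrafilter S) :=
  {p | p ∈ zeroPlus S ∧ ∀ P ∈ p, ∃ x : Fin v → S,
    ∀ a : Fin u, ∃ s ∈ P, ((s : ℝ) = (A.map ((↑) : ℚ → ℝ)).mulVec (fun j => (x j : ℝ)) a)}

/-! Write `c⁻¹ B = {y ∈ S : c · y ∈ B}`. Since `c · A x⃗ = A (c · x⃗)`, the images of `A` are closed
under scaling. If `B ∈ p · q`, some `c` satisfies `c⁻¹ B ∈ q`; an image of `A` inside `c⁻¹ B`,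
scaled by `c`, lies in `B`. If `B ∈ q · p`, there is an image of `A` each of whose entries `s`
satisfies `s⁻¹ B ∈ p`; as there are finitely many entries, one `c` lies in all these sets at once,
and the image scaled by `c` lies in `B`. -/

attribute [local instance] Ultrafilter.mul

/-- `p` is rich in `F` if each of its members contains all the entries of some family in `F`. For
`F` the set of images of a matrix `A`, this is the condition that cuts `I(A)` out of `0⁺(S)`. -/
def IsRichIn {ι M : Type*} (F : Set (ι → M)) (p : Ultrafilter M) : Prop :=
  ∀ P ∈ p, ∃ f ∈ F, ∀ i, f i ∈ P

section IsRichIn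

variable {ι M : Type*} [Mul M] {F : Set (ι → M)} {q : Ultrafilter M}

theorem IsRichIn.mul_left (hF : ∀ c, ∀ f ∈ F, (fun i => c * f i) ∈ F) (hq : IsRichIn F q)
    (p : Ultrafilter M) : IsRichIn F (p * q) := by
  intro B hB
  obtain ⟨c, hc⟩ := ((Ultrafilter.eventually_mul p q (· ∈ B)).1 hB).exists
  obtain ⟨f, hfF, hf⟩ := hq _ hc
  exact ⟨_, hF c f hfF, hf⟩

theorem IsRichIn.mul_right [Finite ι] (hF : ∀ c, ∀ f ∈ F, (fun i => f i * c) ∈ F)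
    (hq : IsRichIn F q) (p : Ultrafilter M) : IsRichIn F (q * p) := by
  intro B hB
  obtain ⟨f, hfF, hf⟩ := hq _ ((Ultrafilter.eventually_mul q p (· ∈ B)).1 hB)
  obtain ⟨c, hc⟩ := (Filter.eventually_all.2 hf).exists
  exact ⟨_, hF c f hfF, hc⟩

end IsRichIn

/-- The families of elements of `T` that occur as `A x⃗` for a vector `x⃗` with entries in `T`. -/
def imagesIn {R m n : Type*} [NonUnitalNonAssocSemiring R] [Fintype n] (T : Subsemigroup R)
    (A : Matrix m n R) : Set (m → T) :=
  {f | ∃ x : n → T, ∀ i, (f i : R) = A.mulVec (fun j => (x j : R)) i}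

theorem mul_left_mem_imagesIn {R m n : Type*} [CommSemiring R] [Fintype n]
    {T : Subsemigroup R} {A : Matrix m n R} (c : T) (f : m → T) (hf : f ∈ imagesIn T A) :
    (fun i => c * f i) ∈ imagesIn T A := by
  obtain ⟨x, hx⟩ := hf
  refine ⟨fun j => c * x j, fun i => ?_⟩
  calc ((c * f i : T) : R) = (c : R) * A.mulVec (fun j => (x j : R)) i := by
        rw [MulMemClass.coe_mul, hx]
    _ = A.mulVec (fun j => ((c * x j : T) : R)) i :=
        (congrFun (A.mulVec_smul (c : R) fun j => (x j : R)) i).symm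

section PositiveReals

variable {T : Subsemigroup ℝ} {p q : Ultrafilter T}

theorem umulS_eq_mul (hT : ∀ a ∈ (T : Set ℝ), ∀ b ∈ (T : Set ℝ), a * b ∈ (T : Set ℝ)) :
    umulS T hT p q = p * q :=
  rfl

theorem mul_mem_zeroPlus (hT : (T : Set ℝ) ⊆ Set.Ioi 0) (hq : q ∈ zeroPlus T) :
    p * q ∈ zeroPlus T := by
  intro r hr
  refine (Ultrafilter.eventually_mul p q fun s => (s : ℝ) < r).2 (.of_forall fun x => ?_)
  have hx : 0 < (x : ℝ) := hT x.2
  filter_upwards [hq (r / x) (div_pos hr hx)] with y hy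
  exact (lt_div_iff₀' hx).1 hy

theorem mem_IA_iff {u v : ℕ} {A : Matrix (Fin u) (Fin v) ℚ} :
    p ∈ IA T A ↔ p ∈ zeroPlus T ∧ IsRichIn (imagesIn T (A.map ((↑) : ℚ → ℝ))) p := by
  refine and_congr_right fun _ => forall₂_congr fun P _ => ?_
  constructor
  · rintro ⟨x, hx⟩
    choose f hfP hfx using hx
    exact ⟨f, ⟨x, hfx⟩, hfP⟩
  · rintro ⟨f, ⟨x, hfx⟩, hfP⟩
    exact ⟨x, fun a => ⟨f a, hfP a, hfx a⟩⟩

end PositiveReals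

theorem IA_two_sided_ideal_general (S : Set ℝ) (hSpos : S ⊆ Set.Ioi 0)
    (hSmul : ∀ a ∈ S, ∀ b ∈ S, a * b ∈ S) (u v : ℕ) (A : Matrix (Fin u) (Fin v) ℚ) :
    ∀ q ∈ IA S A, (∀ p, umulS S hSmul p q ∈ IA S A) ∧
      ∀ p ∈ zeroPlus S, umulS S hSmul q p ∈ IA S A := by
  lift S to Subsemigroup ℝ using fun ha hb => hSmul _ ha _ hb
  intro q hq
  obtain ⟨hq₀, hqA⟩ := mem_IA_iff.1 hq
  refine ⟨fun p => ?_, fun p hp => ?_⟩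
  · rw [umulS_eq_mul, mem_IA_iff]
    exact ⟨mul_mem_zeroPlus hSpos hq₀, hqA.mul_left mul_left_mem_imagesIn p⟩
  · rw [umulS_eq_mul, mem_IA_iff]
    refine ⟨mul_mem_zeroPlus hSpos hp, hqA.mul_right (fun c f hf => ?_) p⟩
    simpa only [mul_comm] using mul_left_mem_imagesIn c f hf

/-- For a dense multiplicatively closed subsemigroup `S` of `((0, ∞), +)`
and a finite `u × v` matrix `A` over ℚ that is image partition regular near 0 over `S`,
the set `I(A)` is a two-sided ideal of `(0⁺(S), ·)`. -/
theorem IA_two_sided_ideal (S : Set ℝ)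
    (hSpos : S ⊆ Set.Ioi 0)
    (hSadd : ∀ a ∈ S, ∀ b ∈ S, a + b ∈ S)
    (hSmul : ∀ a ∈ S, ∀ b ∈ S, a * b ∈ S)
    (hSdense : ∀ x ∈ Set.Ioi (0 : ℝ), ∀ ε > 0, ∃ s ∈ S, |x - s| < ε)
    (u v : ℕ) (A : Matrix (Fin u) (Fin v) ℚ) (hA : IPRNearZero S A) :
    ∀ p ∈ zeroPlus S, ∀ q ∈ IA S A,
      umulS S hSmul p q ∈ IA S A ∧ umulS S hSmul q p ∈ IA S A := by
  intro p hp q hq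
  obtain ⟨hleft, hright⟩ := IA_two_sided_ideal_general S hSpos hSmul u v A q hq
  exact ⟨hleft p, hright p hp⟩
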